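/- arXiv:2103.13400 — 5 statements merged into one kernel-verified Lean document; each statement's English description precedes it below -/
import Mathlib

section
/- Let A₁ and A₂ be unital complex *-algebras and let φ₁ and φ₂ be states on A₁ and A₂ respectively. Then the ℂ-linear functional φ₁ ⊗ φ₂ on the algebraic tensor product A₁ ⊗[ℂ] A₂, determined by (φ₁ ⊗ φ₂)(a ⊗ b) = φ₁(a)·φ₂(b), is a state: it maps the unit 1 ⊗ 1 to 1, and for every element t of A₁ ⊗[ℂ] A₂ the value (φ₁ ⊗ φ₂)(star t * t) is a nonnegative real number. -/
open scoped TensorProduct ComplexOrder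

/-- A state on a unital complex `*`-algebra: a `ℂ`-linear functional sending `1` to `1`
and `star a * a` to a nonnegative real number (using the partial order on `ℂ`,
where `0 ≤ z` means `z` is real and nonnegative). -/
def IsState {A : Type*} [Ring A] [StarRing A] [Algebra ℂ A]
    (ω : A →ₗ[ℂ] ℂ) : Prop :=
  ω 1 = 1 ∧ ∀ a : A, 0 ≤ ω (star a * a)

/-!
A functional `φ` is positive exactly when the sesquilinear form `(a, b) ↦ φ (star a * b)` is, and
the form of `φ₁ ⊗ φ₂` is the tensor product of the forms of `φ₁` and `φ₂`. At `t = ∑ i, a i ⊗ₜ b i`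
the tensor product form is the sum of the entries of the Hadamard product of the Gram matrices of
`a` and `b`. These are Hermitian because polarization over `ℂ` recovers Hermitian symmetry from
positivity, so the Schur product theorem applies.
-/

section SesquilinearForm

variable {E F : Type*} [AddCommMonoid E] [AddCommMonoid F]

theorem isPosSemidef_of_isNonneg [Module ℂ E] {B : E →ₗ⋆[ℂ] E →ₗ[ℂ] ℂ} (hB : B.IsNonneg) :
    B.IsPosSemidef where
  isNonneg := hB
  isSymm.eq x y := by
    have im_self (z : E) : (B z z).im = 0 := (Complex.nonneg_iff.mp (hB.nonneg z)).2.symm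
    have im_add : (B x y + B y x).im = 0 := by
      have h := im_self (x + y)
      simp only [map_add, LinearMap.add_apply, Complex.add_im, im_self] at h ⊢
      linarith
    have im_I_mul_sub : (Complex.I * (B x y - B y x)).im = 0 := by
      have h := im_self (x + Complex.I • y)
      simp only [map_add, map_smul, LinearMap.map_smulₛₗ, LinearMap.add_apply,
        LinearMap.smul_apply, smul_eq_mul, Complex.conj_I, neg_mul, Complex.neg_im,
        Complex.add_im, Complex.I_mul_im, Complex.add_re, Complex.neg_re, Complex.sub_re,
        Complex.I_mul_re, im_self] at h ⊢
      linarith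
    rw [Complex.add_im] at im_add
    rw [Complex.I_mul_im, Complex.sub_re] at im_I_mul_sub
    apply Complex.ext <;> simp only [Complex.conj_re, Complex.conj_im] <;> linarith

theorem posSemidef_gram_of_isPosSemidef {R ι : Type*} [CommRing R] [PartialOrder R] [StarRing R]
    [Module R E] {B : E →ₗ⋆[R] E →ₗ[R] R} (hB : B.IsPosSemidef) (v : ι → E) :
    (Matrix.of fun i j ↦ B (v i) (v j)).PosSemidef := by
  refine ⟨Matrix.IsHermitian.ext fun i j ↦ hB.isSymm.eq (v j) (v i), fun x ↦ ?_⟩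
  calc
    0 ≤ B (x.sum fun i c ↦ c • v i) (x.sum fun i c ↦ c • v i) := hB.isNonneg.nonneg _
    _ = x.sum fun i c ↦ x.sum fun j d ↦ star c * B (v i) (v j) * d := by
      simp only [Finsupp.sum, map_sum, LinearMap.sum_apply, LinearMap.map_smulₛₗ, map_smul,
        LinearMap.smul_apply, smul_eq_mul, starRingEnd_apply, Finset.mul_sum]
      rw [Finset.sum_comm]
      exact Finset.sum_congr rfl fun i _ ↦ Finset.sum_congr rfl fun j _ ↦ by ring

/-- The tensor product of two sesquilinear forms, with value `B₁ x x' * B₂ y y'` at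
`(x ⊗ₜ y, x' ⊗ₜ y')`. It carries positivity from the factors to their tensor product. -/
noncomputable def tensorForm {R : Type*} [CommSemiring R] [StarRing R] [Module R E] [Module R F]
    (B₁ : E →ₗ⋆[R] E →ₗ[R] R) (B₂ : F →ₗ⋆[R] F →ₗ[R] R) :
    E ⊗[R] F →ₗ⋆[R] E ⊗[R] F →ₗ[R] R :=
  (TensorProduct.map₂ B₁ B₂).compr₂ₛₗ (LinearMap.mul' R R)

@[simp]
theorem tensorForm_tmul_tmul {R : Type*} [CommSemiring R] [StarRing R] [Module R E] [Module R F]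
    (B₁ : E →ₗ⋆[R] E →ₗ[R] R) (B₂ : F →ₗ⋆[R] F →ₗ[R] R) (x x' : E) (y y' : F) :
    tensorForm B₁ B₂ (x ⊗ₜ y) (x' ⊗ₜ y') = B₁ x x' * B₂ y y' :=
  rfl

theorem isNonneg_tensorForm {𝕜 : Type*} [RCLike 𝕜] [Module 𝕜 E] [Module 𝕜 F]
    {B₁ : E →ₗ⋆[𝕜] E →ₗ[𝕜] 𝕜} {B₂ : F →ₗ⋆[𝕜] F →ₗ[𝕜] 𝕜}
    (hB₁ : B₁.IsPosSemidef) (hB₂ : B₂.IsPosSemidef) : (tensorForm B₁ B₂).IsNonneg where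
  nonneg t := by
    obtain ⟨k, x, y, rfl⟩ := TensorProduct.exists_sum_tmul_eq t
    have schur := (posSemidef_gram_of_isPosSemidef hB₁ x).hadamard
      (posSemidef_gram_of_isPosSemidef hB₂ y)
    calc
      0 ≤ ∑ i, ∑ j, B₁ (x i) (x j) * B₂ (y i) (y j) := by
        simpa [dotProduct, Matrix.mulVec] using schur.dotProduct_mulVec_nonneg 1
      _ = tensorForm B₁ B₂ (∑ i, x i ⊗ₜ y i) (∑ j, x j ⊗ₜ y j) := by
        simp only [map_sum, LinearMap.sum_apply, tensorForm_tmul_tmul]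
        exact Finset.sum_comm

end SesquilinearForm

section Functional

variable {A₁ A₂ : Type*} [NonUnitalNonAssocSemiring A₁] [StarAddMonoid A₁]
  [NonUnitalNonAssocSemiring A₂] [StarAddMonoid A₂]

/-- The sesquilinear form `(a, b) ↦ ω (star a * b)` of the Gelfand–Naimark–Segal construction.
Positivity of the functional `ω` is the condition `(gnsForm ω).IsNonneg`. -/
def gnsForm {R A : Type*} [CommSemiring R] [StarRing R]
    [NonUnitalNonAssocSemiring A] [StarAddMonoid A] [Module R A] [SMulCommClass R A A]
    [IsScalarTower R A A] [StarModule R A] (ω : Module.Dual R A) : A →ₗ⋆[R] A →ₗ[R] R :=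
  (LinearMap.mul R A).compr₂ ω ∘ₛₗ (starLinearEquiv R : A ≃ₗ⋆[R] A).toLinearMap

@[simp]
theorem gnsForm_apply {R A : Type*} [CommSemiring R] [StarRing R]
    [NonUnitalNonAssocSemiring A] [StarAddMonoid A] [Module R A] [SMulCommClass R A A]
    [IsScalarTower R A A] [StarModule R A] (ω : Module.Dual R A) (a b : A) :
    gnsForm ω a b = ω (star a * b) :=
  rfl

theorem gnsForm_dualDistrib {R : Type*} [CommSemiring R] [StarRing R]
    [Module R A₁] [SMulCommClass R A₁ A₁] [IsScalarTower R A₁ A₁] [StarModule R A₁]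
    [Module R A₂] [SMulCommClass R A₂ A₂] [IsScalarTower R A₂ A₂] [StarModule R A₂]
    (φ₁ : Module.Dual R A₁) (φ₂ : Module.Dual R A₂) :
    gnsForm (TensorProduct.dualDistrib R A₁ A₂ (φ₁ ⊗ₜ φ₂)) =
      tensorForm (gnsForm φ₁) (gnsForm φ₂) := by
  ext a₁ a₂ b₁ b₂
  simp

theorem isNonneg_gnsForm_dualDistrib
    [Module ℂ A₁] [SMulCommClass ℂ A₁ A₁] [IsScalarTower ℂ A₁ A₁] [StarModule ℂ A₁]
    [Module ℂ A₂] [SMulCommClass ℂ A₂ A₂] [IsScalarTower ℂ A₂ A₂] [StarModule ℂ A₂]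
    {φ₁ : Module.Dual ℂ A₁} {φ₂ : Module.Dual ℂ A₂}
    (hφ₁ : (gnsForm φ₁).IsNonneg) (hφ₂ : (gnsForm φ₂).IsNonneg) :
    (gnsForm (TensorProduct.dualDistrib ℂ A₁ A₂ (φ₁ ⊗ₜ φ₂))).IsNonneg := by
  rw [gnsForm_dualDistrib]
  exact isNonneg_tensorForm (isPosSemidef_of_isNonneg hφ₁) (isPosSemidef_of_isNonneg hφ₂)

end Functional

theorem IsState.dualDistrib {A₁ A₂ : Type*}
    [Ring A₁] [StarRing A₁] [Algebra ℂ A₁] [StarModule ℂ A₁]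
    [Ring A₂] [StarRing A₂] [Algebra ℂ A₂] [StarModule ℂ A₂]
    {φ₁ : Module.Dual ℂ A₁} {φ₂ : Module.Dual ℂ A₂} (hφ₁ : IsState φ₁) (hφ₂ : IsState φ₂) :
    IsState (TensorProduct.dualDistrib ℂ A₁ A₂ (φ₁ ⊗ₜ φ₂)) where
  left := by
    rw [Algebra.TensorProduct.one_def, TensorProduct.dualDistrib_apply, hφ₁.1, hφ₂.1, one_mul]
  right := (isNonneg_gnsForm_dualDistrib ⟨hφ₁.2⟩ ⟨hφ₂.2⟩).nonneg

/-- The tensor product of two states is a state: if `Φ` is the `ℂ`-linear functional on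
`A₁ ⊗[ℂ] A₂` determined by `Φ (a ⊗ₜ b) = φ₁ a * φ₂ b`, and `st` is the star operation on
`A₁ ⊗[ℂ] A₂` determined by `st (a ⊗ₜ b) = star a ⊗ₜ star b`, then `Φ 1 = 1` and
`Φ (st t * t)` is nonnegative for every `t`. -/
theorem tensor_product_of_states_is_state
    {A₁ A₂ : Type*}
    [Ring A₁] [StarRing A₁] [Algebra ℂ A₁] [StarModule ℂ A₁]
    [Ring A₂] [StarRing A₂] [Algebra ℂ A₂] [StarModule ℂ A₂]
    (φ₁ : A₁ →ₗ[ℂ] ℂ) (φ₂ : A₂ →ₗ[ℂ] ℂ)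
    (hφ₁ : IsState φ₁) (hφ₂ : IsState φ₂)
    (st : A₁ ⊗[ℂ] A₂ →+ A₁ ⊗[ℂ] A₂)
    (hst : ∀ (a : A₁) (b : A₂), st (a ⊗ₜ[ℂ] b) = star a ⊗ₜ[ℂ] star b)
    (Φ : A₁ ⊗[ℂ] A₂ →ₗ[ℂ] ℂ)
    (hΦ : ∀ (a : A₁) (b : A₂), Φ (a ⊗ₜ[ℂ] b) = φ₁ a * φ₂ b) :
    Φ 1 = 1 ∧ ∀ t : A₁ ⊗[ℂ] A₂, 0 ≤ Φ (st t * t) := by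
  have Φ_eq : Φ = TensorProduct.dualDistrib ℂ A₁ A₂ (φ₁ ⊗ₜ φ₂) := TensorProduct.ext' hΦ
  have st_eq (t : A₁ ⊗[ℂ] A₂) : st t = star t := by
    induction t with
    | zero => rw [map_zero, star_zero]
    | tmul a b => exact hst a b
    | add s t hs ht => rw [map_add, star_add, hs, ht]
  simp only [Φ_eq, st_eq]
  exact hφ₁.dualDistrib hφ₂
end

section
/- Let R be a unital complex *-algebra and let A and B be unital *-subalgebras of R such that every element of A commutes with every element of B. Let ω be a state on R for which there exists a sequence (ωₙ) of states on R, each of which is a finite convex combination of product states relative to A and B, such that ωₙ(r) converges to ω(r) for every r ∈ R. Then ω has the Verch–Werner ppt property relative to A and B: for every N ∈ ℕ and all families x : Fin N → A and y : Fin N → B, the sum ∑_{j,k} ω((x k) * star (x j) * star (y j) * (y k)) is a nonnegative real number. -/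
/-!
For a positive functional `φ` and families `x`, `y`, both `(φ (x k * star (x j)))` and
`(φ (star (y j) * y k))` are positive semidefinite matrices in `(j, k)`: the second is a Gram matrix
and the first the transpose of one. If `φ` is a product state, the matrix whose entries are summed
in the ppt property is their Hadamard product, which is positive semidefinite by Schur's theorem.
The functionals with the ppt property form a pointwise closed convex cone, so the property passes to
convex combinations and to limits.
-/

open scoped ComplexOrder

/-- A state on `R` is a product state relative to commuting unital `*`-subalgebras
`A` and `B` if it factorises on products of elements of `A` and `B`. -/
def IsProductState {R : Type*} [Ring R] [StarRing R] [Algebra ℂ R] [StarModule ℂ R]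
    (A B : StarSubalgebra ℂ R) (ω : R →ₗ[ℂ] ℂ) : Prop :=
  IsState ω ∧ ∀ a ∈ A, ∀ b ∈ B, ω (a * b) = ω a * ω b

open Filter Topology Matrix

section PositiveFunctional

variable {R S : Type*} [Ring R] [StarRing R] [Algebra ℂ R] [Ring S] [StarRing S] [Algebra ℂ S]

/-- A positive linear functional on a `*`-algebra, i.e. a state without the normalisation `φ 1 = 1`.
Positivity is tested on the elements `star a * a`, as `R` carries no order. -/
def IsPositiveFunctional (φ : R →ₗ[ℂ] ℂ) : Prop :=
  ∀ a, 0 ≤ φ (star a * a)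

namespace IsPositiveFunctional

variable [StarModule ℂ R] [StarModule ℂ S] {φ : R →ₗ[ℂ] ℂ} {ψ : S →ₗ[ℂ] ℂ}
  {ι : Type*}

theorem map_star (hφ : IsPositiveFunctional φ) (r : R) : φ (star r) = star (φ r) := by
  have im_eq_zero (a : R) : (φ (star a * a)).im = 0 := (Complex.nonneg_iff.mp (hφ a)).2.symm
  have im_one : (φ 1).im = 0 := by simpa only [star_one, one_mul] using im_eq_zero 1
  have im_add_eq_zero : (φ (star r)).im + (φ r).im = 0 := by
    simpa [add_mul, mul_add, im_one, im_eq_zero r] using im_eq_zero (1 + r)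
  have neg_re_add_eq_zero : -(φ (star r)).re + (φ r).re = 0 := by
    simpa [add_mul, mul_add, smul_smul, im_one, im_eq_zero r] using
      im_eq_zero (1 + Complex.I • r)
  exact Complex.ext (neg_add_eq_zero.mp neg_re_add_eq_zero)
    (eq_neg_of_add_eq_zero_left im_add_eq_zero)

theorem posSemidef_gram (hφ : IsPositiveFunctional φ) (a : ι → R) :
    (Matrix.of fun j k => φ (star (a j) * a k)).PosSemidef := by
  refine ⟨Matrix.ext fun j k => ?_, fun c => ?_⟩
  · simp only [conjTranspose_apply, of_apply, ← hφ.map_star, star_mul, star_star]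
  · have quadratic_form : φ (star (c.sum fun k z => z • a k) * c.sum fun k z => z • a k) =
        c.sum fun j z => c.sum fun k w => star z * φ (star (a j) * a k) * w := by
      simp only [Finsupp.sum, star_sum, star_smul, Finset.sum_mul_sum, smul_mul_smul_comm, map_sum,
        map_smul, smul_eq_mul, mul_right_comm]
    exact quadratic_form ▸ hφ _

theorem sum_sum_mul_nonneg [Fintype ι] (hφ : IsPositiveFunctional φ) (hψ : IsPositiveFunctional ψ)
    (x : ι → R) (y : ι → S) :
    0 ≤ ∑ j, ∑ k, φ (x k * star (x j)) * ψ (star (y j) * y k) := by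
  have schur := (hφ.posSemidef_gram (star x)).transpose.hadamard (hψ.posSemidef_gram y)
  simpa only [dotProduct, mulVec, hadamard_apply, transpose_apply, of_apply, Pi.star_apply,
    star_star, Pi.one_apply, star_one, one_mul, mul_one] using schur.dotProduct_mulVec_nonneg 1

end IsPositiveFunctional

end PositiveFunctional

theorem sum_ofReal_smul_mem_hull {E ι : Type*} [AddCommGroup E] [Module ℂ E] [Fintype ι] {s : Set E}
    {c : ι → ℝ} {v : ι → E} (hc : ∀ i, 0 ≤ c i) (hv : ∀ i, v i ∈ s) :
    ∑ i, (c i : ℂ) • v i ∈ PointedCone.hull ℝ s := by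
  simp only [Complex.coe_smul]
  exact sum_mem fun i _ => PointedCone.smul_mem _ (hc i) (PointedCone.subset_hull (hv i))

section PPT

variable {R : Type*} [Ring R] [StarRing R] [Algebra ℂ R] [StarModule ℂ R]

/-- The cone of all linear functionals on `R`, normalised or not, with the Verch–Werner ppt property
relative to `A` and `B`. -/
def verchWernerPPTCone (A B : StarSubalgebra ℂ R) : PointedCone ℝ (R →ₗ[ℂ] ℂ) where
  carrier := {φ | ∀ (N : ℕ) (x : Fin N → A) (y : Fin N → B),
    0 ≤ ∑ j, ∑ k, φ ((x k : R) * star (x j : R) * star (y j : R) * (y k : R))}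
  zero_mem' N x y := by simp only [LinearMap.zero_apply, Finset.sum_const_zero, le_refl]
  add_mem' hφ hψ N x y := by
    simpa only [LinearMap.add_apply, Finset.sum_add_distrib] using
      add_nonneg (hφ N x y) (hψ N x y)
  smul_mem' c φ hφ N x y := by
    change 0 ≤ ∑ j, ∑ k, (c : ℝ) • φ _
    simpa only [Finset.smul_sum] using smul_nonneg c.2 (hφ N x y)

variable {A B : StarSubalgebra ℂ R}

theorem IsProductState.mem_verchWernerPPTCone {φ : R →ₗ[ℂ] ℂ} (hφ : IsProductState A B φ) :
    φ ∈ verchWernerPPTCone A B := by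
  intro N x y
  have hpos : IsPositiveFunctional φ := hφ.1.2
  have factor (j k : Fin N) : φ ((x k : R) * star (x j : R) * star (y j : R) * (y k : R)) =
      φ ((x k : R) * star (x j : R)) * φ (star (y j : R) * (y k : R)) := by
    rw [mul_assoc _ (star (y j : R))]
    exact hφ.2 _ (x k * star (x j)).2 _ (star (y j) * y k).2
  simpa only [factor] using hpos.sum_sum_mul_nonneg hpos (fun j => (x j : R)) (fun j => (y j : R))

theorem mem_verchWernerPPTCone_of_tendsto {α : Type*} {l : Filter α} [l.NeBot]
    {φ : R →ₗ[ℂ] ℂ} {φs : α → R →ₗ[ℂ] ℂ} (hφs : ∀ᶠ a in l, φs a ∈ verchWernerPPTCone A B)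
    (hlim : ∀ r, Tendsto (fun a => φs a r) l (𝓝 (φ r))) :
    φ ∈ verchWernerPPTCone A B := fun N x y =>
  ge_of_tendsto (tendsto_finsetSum _ fun _ _ => tendsto_finsetSum _ fun _ _ => hlim _)
    (hφs.mono fun _ h => h N x y)

theorem classically_correlated_verch_werner_ppt_general {α : Type*} {l : Filter α} [l.NeBot]
    {φ : R →ₗ[ℂ] ℂ} {φs : α → R →ₗ[ℂ] ℂ}
    (hφs : ∀ᶠ a in l, φs a ∈ PointedCone.hull ℝ {μ | IsProductState A B μ})
    (hlim : ∀ r, Tendsto (fun a => φs a r) l (𝓝 (φ r))) :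
    φ ∈ verchWernerPPTCone A B :=
  have hull_le : PointedCone.hull ℝ {μ | IsProductState A B μ} ≤ verchWernerPPTCone A B :=
    Submodule.span_le.mpr fun _ hμ => hμ.mem_verchWernerPPTCone
  mem_verchWernerPPTCone_of_tendsto (hφs.mono fun _ h => hull_le h) hlim

end PPT

/-- Every classically correlated state, i.e. every pointwise limit of finite convex
combinations of product states relative to commuting unital `*`-subalgebras `A`, `B` of `R`,
has the Verch-Werner ppt property. -/
theorem classically_correlated_verch_werner_ppt
    {R : Type*} [Ring R] [StarRing R] [Algebra ℂ R] [StarModule ℂ R]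
    (A B : StarSubalgebra ℂ R)
    (hcomm : ∀ a ∈ A, ∀ b ∈ B, a * b = b * a)
    (ω : R →ₗ[ℂ] ℂ) (hω : IsState ω)
    (ωs : ℕ → (R →ₗ[ℂ] ℂ))
    (hstates : ∀ n, IsState (ωs n))
    (hconv : ∀ n, ∃ (m : ℕ) (lam : Fin m → ℝ) (μ : Fin m → (R →ₗ[ℂ] ℂ)),
      (∀ j, 0 < lam j) ∧ (∑ j, lam j = 1) ∧
      (∀ j, IsProductState A B (μ j)) ∧
      ωs n = ∑ j, (lam j : ℂ) • μ j)
    (hlim : ∀ r : R, Filter.Tendsto (fun n => ωs n r) Filter.atTop (nhds (ω r)))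
    (N : ℕ) (x : Fin N → A) (y : Fin N → B) :
    0 ≤ ∑ j : Fin N, ∑ k : Fin N,
      ω ((x k : R) * star (x j : R) * star (y j : R) * (y k : R)) := by
  refine classically_correlated_verch_werner_ppt_general (.of_forall fun n => ?_) hlim N x y
  obtain ⟨m, lam, μ, hlam, -, hμ, h⟩ := hconv n
  exact h ▸ sum_ofReal_smul_mem_hull (fun j => (hlam j).le) hμ
end

section
/- Let A be a real symmetric 2×2 matrix such that the complex 2×2 matrix A + i·s is positive semidefinite, where s = !![0, 1; −1, 0] and real matrices are regarded as complex matrices by entrywise inclusion. Then A is positive semidefinite, det A ≥ 1, and trace A ≥ 2. -/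
/-!
The entrywise real part of a positive semidefinite matrix is positive semidefinite, because its
quadratic form is the restriction of the real part of the original form to real vectors. For a
Hermitian `2 × 2` matrix `M`, taking real parts discards only the imaginary part of the
off-diagonal entry, so it raises the determinant by exactly `(im M₀₁)²`. For `M = A + i·s` this
square is `1`, hence `det A = det M + 1 ≥ 1`; the trace bound is then the arithmetic-geometric mean
inequality for the two eigenvalues, i.e. the nonnegativity of the discriminant of `A`.
-/

open scoped ComplexOrder
/-- The standard symplectic form on one mode. -/
def sMat : Matrix (Fin 2) (Fin 2) ℝ := !![0, 1; -1, 0]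

section RealPart

variable {𝕜 n : Type*} [RCLike 𝕜]

theorem posSemidef_map_re {M : Matrix n n 𝕜} (hM : M.PosSemidef) :
    (M.map RCLike.re).PosSemidef := by
  refine ⟨hM.isHermitian.map RCLike.re fun z ↦ by simp, fun x ↦ ?_⟩
  have hform := (RCLike.nonneg_iff.mp
    (hM.2 (x.mapRange ((↑) : ℝ → 𝕜) RCLike.ofReal_zero))).1
  simpa [Finsupp.sum_mapRange_index, map_finsuppSum] using hform

theorem det_map_re_of_isHermitian {M : Matrix (Fin 2) (Fin 2) 𝕜} (hM : M.IsHermitian) :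
    (M.map RCLike.re).det = RCLike.re M.det + RCLike.im (M 0 1) ^ 2 := by
  have h00 : RCLike.im (M 0 0) = 0 := RCLike.conj_eq_iff_im.mp (hM.apply 0 0)
  have h10 : M 1 0 = star (M 0 1) := (hM.apply 1 0).symm
  simp only [Matrix.det_fin_two, Matrix.map_apply, h10, RCLike.star_def, map_sub, RCLike.mul_re,
    RCLike.conj_re, RCLike.conj_im, h00]
  ring

theorem sq_im_le_det_map_re {M : Matrix (Fin 2) (Fin 2) 𝕜} (hM : M.PosSemidef) :
    RCLike.im (M 0 1) ^ 2 ≤ (M.map RCLike.re).det := by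
  rw [det_map_re_of_isHermitian hM.isHermitian]
  exact le_add_of_nonneg_left (RCLike.nonneg_iff.mp hM.det_nonneg).1

theorem map_re_ofReal_add_I_smul {m : Type*} (A B : Matrix m n ℝ) :
    (A.map (Complex.ofReal ·) + Complex.I • B.map (Complex.ofReal ·)).map RCLike.re = A := by
  ext i j
  simp

end RealPart

section Discriminant

variable {R : Type*} [CommRing R] [LinearOrder R] [IsStrictOrderedRing R]
  {A : Matrix (Fin 2) (Fin 2) R}

theorem discr_nonneg_of_isSymm (hA : A.IsSymm) : 0 ≤ A.discr := by
  have hdiscr : A.discr = (A 0 0 - A 1 1) ^ 2 + (2 * A 0 1) ^ 2 := by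
    rw [Matrix.discr_fin_two, Matrix.trace_fin_two, Matrix.det_fin_two, hA.apply 0 1]
    ring
  rw [hdiscr]
  positivity

theorem two_mul_le_trace_of_sq_le_det (hA : A.IsSymm) (htrace : 0 ≤ A.trace) {c : R}
    (hc : c ^ 2 ≤ A.det) : 2 * c ≤ A.trace := by
  have hdiscr : 0 ≤ A.trace ^ 2 - 4 * A.det := A.discr_fin_two ▸ discr_nonneg_of_isSymm hA
  have hsq : (2 * c) ^ 2 ≤ A.trace ^ 2 := by linarith
  exact le_of_sq_le_sq hsq htrace

end Discriminant

/-- If `A` is a real symmetric `2×2` matrix such that `A + i·s` is positive semidefinite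
(as a complex matrix), then `A` is positive semidefinite, `det A ≥ 1` and `trace A ≥ 2`. -/
theorem posSemidef_det_ge_one_trace_ge_two_of_uncertainty
    (A : Matrix (Fin 2) (Fin 2) ℝ) (hA : A.IsSymm)
    (h : (A.map (Complex.ofReal ·) +
        Complex.I • sMat.map (Complex.ofReal ·)).PosSemidef) :
    A.PosSemidef ∧ 1 ≤ A.det ∧ 2 ≤ A.trace := by
  have hpos : A.PosSemidef := map_re_ofReal_add_I_smul A sMat ▸ posSemidef_map_re h
  have hdet : 1 ≤ A.det := by
    simpa [map_re_ofReal_add_I_smul, sMat] using sq_im_le_det_map_re h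
  have htrace : 2 * 1 ≤ A.trace :=
    two_mul_le_trace_of_sq_le_det hA hpos.trace_nonneg (by rwa [one_pow])
  exact ⟨hpos, hdet, by rwa [mul_one] at htrace⟩
end

section
/- Let A be a real symmetric 2×2 matrix such that the complex matrix A + i·s is positive semidefinite, where s = !![0, 1; −1, 0] and real matrices are regarded as complex by entrywise inclusion. If trace A = 2, then A is the 2×2 identity matrix. -/
open scoped ComplexOrder

/-!
Let `s` be real of size `n` with `s² = -1`, and put `B = 1 - i s`. The columns of `B` are
eigenvectors of `i s` for the eigenvalue `-1`, so `(A + i s) B = (A - 1) B`. Since `A + i s` is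
Hermitian, `s` is skew-symmetric, so `Bᴴ = B` and `Re tr (Bᴴ (A + i s) B) = 2 (tr A - n)`. When
`tr A ≤ n`, positivity of `A + i s` forces `(A + i s) B = 0`, whose real part is `A - 1 = 0`.
-/

open scoped Matrix

section PosSemidef

variable {m n 𝕜 : Type*} [Fintype n] [RCLike 𝕜] {M : Matrix n n 𝕜}

open scoped MatrixOrder in
theorem posSemidef_conjTranspose_mul_mul_same_eq_zero_iff (hM : M.PosSemidef)
    (B : Matrix n m 𝕜) : Bᴴ * M * B = 0 ↔ M * B = 0 := by
  classical
  refine ⟨fun h ↦ ?_, fun h ↦ by rw [Matrix.mul_assoc, h, Matrix.mul_zero]⟩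
  obtain ⟨C, rfl⟩ := CStarAlgebra.nonneg_iff_eq_star_mul_self.mp hM.nonneg
  rw [Matrix.star_eq_conjTranspose] at h ⊢
  have hCB : (C * B)ᴴ * (C * B) = 0 := by
    simpa only [Matrix.conjTranspose_mul, Matrix.mul_assoc] using h
  rw [Matrix.mul_assoc, Matrix.conjTranspose_mul_self_eq_zero.mp hCB, Matrix.mul_zero]

theorem posSemidef_mul_eq_zero_of_re_trace_nonpos [Fintype m] (hM : M.PosSemidef)
    (B : Matrix n m 𝕜) (htr : RCLike.re (Bᴴ * M * B).trace ≤ 0) : M * B = 0 := by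
  have hN := hM.conjTranspose_mul_mul_same B
  have htr_zero : (Bᴴ * M * B).trace = 0 :=
    le_antisymm (RCLike.nonpos_iff.mpr ⟨htr, (RCLike.nonneg_iff.mp hN.trace_nonneg).2⟩)
      hN.trace_nonneg
  exact (posSemidef_conjTranspose_mul_mul_same_eq_zero_iff hM B).mp
    (hN.trace_eq_zero_iff.mp htr_zero)

end PosSemidef

section OfReIm

variable {l m n : Type*}

/-- The complex matrix `X + i Y` with real part `X` and imaginary part `Y`, so that identities
between such matrices can be computed over `ℝ`. -/
def ofReIm (X Y : Matrix m n ℝ) : Matrix m n ℂ :=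
  X.map (Complex.ofReal ·) + Complex.I • Y.map (Complex.ofReal ·)

theorem ofReIm_apply_re (X Y : Matrix m n ℝ) (i : m) (j : n) : (ofReIm X Y i j).re = X i j := by
  simp [ofReIm]

theorem ofReIm_apply_im (X Y : Matrix m n ℝ) (i : m) (j : n) : (ofReIm X Y i j).im = Y i j := by
  simp [ofReIm]

theorem ofReIm_inj {X Y X' Y' : Matrix m n ℝ} :
    ofReIm X Y = ofReIm X' Y' ↔ X = X' ∧ Y = Y' := by
  simp only [← Matrix.ext_iff, Complex.ext_iff, ofReIm_apply_re, ofReIm_apply_im, forall_and]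

theorem ofReIm_zero : ofReIm (0 : Matrix m n ℝ) 0 = 0 := by
  simp [ofReIm]

theorem ofReIm_mul [Fintype m] (X Y : Matrix l m ℝ) (X' Y' : Matrix m n ℝ) :
    ofReIm X Y * ofReIm X' Y' = ofReIm (X * X' - Y * Y') (X * Y' + Y * X') := by
  ext i j
  apply Complex.ext <;>
    simp [Matrix.mul_apply, ofReIm_apply_re, ofReIm_apply_im, Finset.sum_sub_distrib,
      Finset.sum_add_distrib]

theorem conjTranspose_ofReIm (X Y : Matrix m n ℝ) : (ofReIm X Y)ᴴ = ofReIm Xᵀ (-Yᵀ) := by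
  ext i j
  apply Complex.ext <;> simp [ofReIm_apply_re, ofReIm_apply_im]

theorem re_trace_ofReIm [Fintype n] (X Y : Matrix n n ℝ) : (ofReIm X Y).trace.re = X.trace := by
  simp [Matrix.trace, ofReIm_apply_re]

theorem isHermitian_ofReIm_iff {X Y : Matrix n n ℝ} :
    (ofReIm X Y).IsHermitian ↔ X.IsSymm ∧ Yᵀ = -Y := by
  rw [Matrix.IsHermitian, conjTranspose_ofReIm, ofReIm_inj, neg_eq_iff_eq_neg, Matrix.IsSymm]

end OfReIm

section Uncertainty

variable {n : Type*} [Fintype n] [DecidableEq n] {s : Matrix n n ℝ}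

theorem ofReIm_mul_ofReIm_one_neg (hs : s * s = -1) (A : Matrix n n ℝ) :
    ofReIm A s * ofReIm 1 (-s) = ofReIm (A - 1) (s - A * s) := by
  rw [ofReIm_mul, ofReIm_inj]
  constructor
  · rw [Matrix.mul_one, Matrix.mul_neg, hs, neg_neg]
  · rw [Matrix.mul_one, Matrix.mul_neg, neg_add_eq_sub]

theorem re_trace_conjTranspose_mul_ofReIm_mul (hs : s * s = -1) (hskew : sᵀ = -s)
    (A : Matrix n n ℝ) :
    ((ofReIm 1 (-s))ᴴ * ofReIm A s * ofReIm 1 (-s)).trace.re =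
      2 * (A.trace - Fintype.card n) := by
  have hB : (ofReIm 1 (-s))ᴴ = ofReIm 1 (-s) := by
    rw [conjTranspose_ofReIm, Matrix.transpose_one, Matrix.transpose_neg, hskew, neg_neg]
  have hsAs : (s * (s - A * s)).trace = A.trace - Fintype.card n := by
    rw [Matrix.trace_mul_comm, sub_mul, Matrix.mul_assoc, hs, Matrix.mul_neg, Matrix.mul_one,
      sub_neg_eq_add, neg_add_eq_sub, Matrix.trace_sub, Matrix.trace_one]
  rw [hB, Matrix.mul_assoc, ofReIm_mul_ofReIm_one_neg hs, ofReIm_mul, re_trace_ofReIm,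
    Matrix.one_mul, Matrix.neg_mul, sub_neg_eq_add, Matrix.trace_add, hsAs, Matrix.trace_sub,
    Matrix.trace_one, two_mul]

theorem eq_one_of_uncertainty_trace_eq_two_general (A : Matrix n n ℝ) (hs : s * s = -1)
    (h : (A.map (Complex.ofReal ·) + Complex.I • s.map (Complex.ofReal ·)).PosSemidef)
    (htr : A.trace ≤ Fintype.card n) :
    A = 1 := by
  change (ofReIm A s).PosSemidef at h
  have hskew : sᵀ = -s := (isHermitian_ofReIm_iff.mp h.isHermitian).2
  have hre : ((ofReIm 1 (-s))ᴴ * ofReIm A s * ofReIm 1 (-s)).trace.re ≤ 0 := by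
    rw [re_trace_conjTranspose_mul_ofReIm_mul hs hskew]
    linarith
  have hzero : ofReIm A s * ofReIm 1 (-s) = 0 :=
    posSemidef_mul_eq_zero_of_re_trace_nonpos h _ hre
  rw [ofReIm_mul_ofReIm_one_neg hs, ← ofReIm_zero, ofReIm_inj] at hzero
  exact sub_eq_zero.mp hzero.1

end Uncertainty

theorem sMat_mul_self : sMat * sMat = -1 := by
  ext i j
  fin_cases i <;> fin_cases j <;> simp [sMat]

/-- If `A` is a real symmetric `2×2` matrix such that `A + i·s` is positive semidefinite
(as a complex matrix) and `trace A = 2`, then `A` is the identity matrix. -/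
theorem eq_one_of_uncertainty_trace_eq_two
    (A : Matrix (Fin 2) (Fin 2) ℝ) (hA : A.IsSymm)
    (h : (A.map (Complex.ofReal ·) +
        Complex.I • sMat.map (Complex.ofReal ·)).PosSemidef)
    (htr : A.trace = 2) :
    A = 1 :=
  eq_one_of_uncertainty_trace_eq_two_general A sMat_mul_self h (by simp [htr])
end

section
/- Let A, B, C : ℝ → Matrix (Fin 2) (Fin 2) ℝ be functions that are continuous at 0. Suppose C(0) = 0, that A(0) and B(0) are symmetric, that the complex matrices A(0) + i·s and B(0) + i·s are positive semidefinite (where s = !![0, 1; −1, 0] and real matrices are regarded as complex by entrywise inclusion), and that det A(0) ≠ 1 and det B(0) ≠ 1. Define the Simon function p_S(λ) := det A(λ) + det B(λ) − det A(λ)·det B(λ) + trace(A(λ)·s·C(λ)·s·B(λ)·s·C(λ)ᵀ·s) − (1 + det C(λ))². Then there exists λ_min > 0 such that p_S(λ) < 0 for all λ ∈ ℝ with |λ| ≤ λ_min. -/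
open scoped ComplexOrder Matrix

/-- The Simon function of the covariance blocks `A`, `B`, `C` at coupling strength `λ`:
the two-mode quasi-free state is entangled iff `simonFn A B C λ > 0`. -/
noncomputable def simonFn (A B C : ℝ → Matrix (Fin 2) (Fin 2) ℝ) (lam : ℝ) : ℝ :=
  (A lam).det + (B lam).det - (A lam).det * (B lam).det
    + (A lam * sMat * C lam * sMat * B lam * sMat * (C lam)ᵀ * sMat).trace
    - (1 + (C lam).det) ^ 2

/-!
At `C = 0` the Simon function factors as `-(det A - 1) * (det B - 1)`. The uncertainty relation
makes `det (M + i s)` nonnegative, and the real part of this determinant is `det M - 1`; so mixed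
one-mode states have determinants strictly greater than `1`, the Simon function is negative at zero
coupling, and by continuity it stays negative for weak coupling.
-/

open Filter Topology

/-- The Simon function of a single triple of covariance blocks, so that
`simonFn A B C lam` is by definition `simonInvariant (A lam) (B lam) (C lam)`. -/
noncomputable def simonInvariant (A B C : Matrix (Fin 2) (Fin 2) ℝ) : ℝ :=
  A.det + B.det - A.det * B.det + (A * sMat * C * sMat * B * sMat * Cᵀ * sMat).trace
    - (1 + C.det) ^ 2

theorem simonInvariant_zero_right (A B : Matrix (Fin 2) (Fin 2) ℝ) :
    simonInvariant A B 0 = -((A.det - 1) * (B.det - 1)) := by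
  simp only [simonInvariant, mul_zero, zero_mul, Matrix.transpose_zero, Matrix.trace_zero,
    Matrix.det_zero]
  ring

theorem continuous_simonInvariant :
    Continuous fun p : Matrix (Fin 2) (Fin 2) ℝ × Matrix (Fin 2) (Fin 2) ℝ ×
      Matrix (Fin 2) (Fin 2) ℝ => simonInvariant p.1 p.2.1 p.2.2 := by
  unfold simonInvariant
  fun_prop

theorem det_map_ofReal_add_I_smul_sMat (M : Matrix (Fin 2) (Fin 2) ℝ) :
    (M.map Complex.ofReal + Complex.I • sMat.map Complex.ofReal).det =
      (M.det - 1 : ℝ) + (M 0 1 - M 1 0 : ℝ) * Complex.I := by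
  simp only [sMat, Matrix.det_fin_two, Matrix.add_apply, Matrix.map_apply, Matrix.smul_apply,
    Matrix.of_apply, Matrix.cons_val', Matrix.cons_val_zero, Matrix.cons_val_fin_one,
    Matrix.cons_val_one, smul_eq_mul]
  push_cast
  linear_combination Complex.I_sq

theorem one_le_det_of_posSemidef_add_I_smul_sMat {M : Matrix (Fin 2) (Fin 2) ℝ}
    (hM : (M.map Complex.ofReal + Complex.I • sMat.map Complex.ofReal).PosSemidef) :
    1 ≤ M.det := by
  have hre := (Complex.nonneg_iff.1 hM.det_nonneg).1
  simpa [det_map_ofReal_add_I_smul_sMat] using hre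

theorem exists_critical_coupling_general {ι : Type*} {l : Filter ι}
    {A B C : ι → Matrix (Fin 2) (Fin 2) ℝ} {A₀ B₀ : Matrix (Fin 2) (Fin 2) ℝ}
    (hA : Tendsto A l (𝓝 A₀)) (hB : Tendsto B l (𝓝 B₀)) (hC : Tendsto C l (𝓝 0))
    (hA₀ : 1 < A₀.det) (hB₀ : 1 < B₀.det) :
    ∀ᶠ i in l, simonInvariant (A i) (B i) (C i) < 0 := by
  have hlim : Tendsto (fun i => simonInvariant (A i) (B i) (C i)) l
      (𝓝 (simonInvariant A₀ B₀ 0)) :=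
    Tendsto.comp (f := fun i => (A i, B i, C i)) (continuous_simonInvariant.tendsto (A₀, B₀, 0))
      (hA.prodMk_nhds (hB.prodMk_nhds hC))
  have hneg : simonInvariant A₀ B₀ 0 < 0 := by
    rw [simonInvariant_zero_right, neg_lt_zero]
    exact mul_pos (sub_pos.2 hA₀) (sub_pos.2 hB₀)
  exact hlim.eventually_lt_const hneg

/-- Existence of a critical coupling strength: if the covariance blocks
`A, B, C : ℝ → Matrix (Fin 2) (Fin 2) ℝ` are continuous at `0` with `C 0 = 0`, the initial
covariance matrices `A 0`, `B 0` are symmetric and satisfy the one-mode uncertainty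
relation, and `det (A 0) ≠ 1`, `det (B 0) ≠ 1` (i.e. the initial restricted states are
mixed), then there is `λ_min > 0` such that the Simon function is negative — no
entanglement — for all couplings `λ` with `|λ| ≤ λ_min`. -/
theorem exists_critical_coupling
    (A B C : ℝ → Matrix (Fin 2) (Fin 2) ℝ)
    (hA : ContinuousAt A 0) (hB : ContinuousAt B 0) (hC : ContinuousAt C 0)
    (hC0 : C 0 = 0)
    (hA0symm : (A 0).IsSymm) (hB0symm : (B 0).IsSymm)
    (hA0 : ((A 0).map (Complex.ofReal ·) +
        Complex.I • sMat.map (Complex.ofReal ·)).PosSemidef)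
    (hB0 : ((B 0).map (Complex.ofReal ·) +
        Complex.I • sMat.map (Complex.ofReal ·)).PosSemidef)
    (hAdet : (A 0).det ≠ 1) (hBdet : (B 0).det ≠ 1) :
    ∃ lammin > (0 : ℝ), ∀ lam : ℝ, |lam| ≤ lammin → simonFn A B C lam < 0 := by
  have hA1 : 1 < (A 0).det := (one_le_det_of_posSemidef_add_I_smul_sMat hA0).lt_of_ne' hAdet
  have hB1 : 1 < (B 0).det := (one_le_det_of_posSemidef_add_I_smul_sMat hB0).lt_of_ne' hBdet
  have hneg : ∀ᶠ lam in 𝓝 0, simonFn A B C lam < 0 :=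
    exists_critical_coupling_general hA hB (hC0 ▸ hC) hA1 hB1
  simpa [Metric.nhds_basis_closedBall.eventually_iff] using hneg
end
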